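/- Let n ∈ ℕ, T > 0 and a > 0. Let j: ℝ^{2n} → ℝ be continuous, positively homogeneous of degree 1 (j(λx) = λ·j(x) for all λ ≥ 0 and x ∈ ℝ^{2n}), positive on ℝ^{2n}∖{0}, and continuously differentiable on ℝ^{2n}∖{0}. Let φ: ℝ → ℝ be C^1 with φ(0) = 0, φ′(0) = 0, φ′(t) > 0 for all t > 0, t ↦ φ′(t)/t strictly decreasing on (0,∞), and φ′(t)/t → 1 as t → 0⁺. Define H̃(x) = a·φ(j(x)). Then: (1) the only constant T-periodic solution of ẋ(t) = J∇H̃(x(t)) is x ≡ 0; and (2) a nonconstant T-periodic C^1 curve x: ℝ → ℝ^{2n} satisfies ẋ(t) = J∇H̃(x(t)) for all t if and only if there exist ρ > 0, τ > 0, and a τ-periodic C^1 curve y: ℝ → ℝ^{2n} with j(y(t)) = 1 and ẏ(t) = J∇j(y(t)) for all t, such that φ′(ρ)/ρ = τ/(aT) and x(t) = ρ·y(τt/T) for all t ∈ ℝ. -/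

import Mathlib

open Set Filter Topology

/-- The standard symplectic matrix `J = [[0, -I_n], [I_n, 0]]` acting on
`ℝ^{2n}`. -/
noncomputable def symplJ (n : ℕ) (x : EuclideanSpace ℝ (Fin (2 * n))) :
    EuclideanSpace ℝ (Fin (2 * n)) :=
  WithLp.toLp 2 fun i => if h : (i : ℕ) < n then -x ⟨(i : ℕ) + n, by omega⟩
           else x ⟨(i : ℕ) - n, by have := i.isLt; omega⟩

theorem symplJ_smul_aux (n : ℕ) (c : ℝ) (v : EuclideanSpace ℝ (Fin (2 * n))) :
    symplJ n (c • v) = c • symplJ n v := by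
  ext i
  by_cases h : (i : ℕ) < n <;> simp [symplJ, h]

theorem symplJ_eq_zero_aux (n : ℕ) (v : EuclideanSpace ℝ (Fin (2 * n)))
    (h : symplJ n v = 0) : v = 0 := by
  ext i
  by_cases hi : (i : ℕ) < n
  · have := congrArg (fun w : EuclideanSpace ℝ (Fin (2 * n)) => w ⟨(i : ℕ) + n, by omega⟩) h
    simpa [symplJ] using this
  · have := congrArg (fun w : EuclideanSpace ℝ (Fin (2 * n)) =>
      w ⟨(i : ℕ) - n, by have := i.isLt; omega⟩) h
    have h2 : (i : ℕ) - n < n := by have := i.isLt; omega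
    have h3 : (i : ℕ) - n + n = i := by omega
    simpa [symplJ, h2, h3] using this

theorem inner_symplJ_aux (n : ℕ) (v : EuclideanSpace ℝ (Fin (2 * n))) :
    inner ℝ v (symplJ n v) = 0 := by
  have key : ∑ i : Fin (2 * n), v i * symplJ n v i = 0 := by
    refine Finset.sum_ninvolution
      (fun i : Fin (2 * n) => if h : (i : ℕ) < n then (⟨(i : ℕ) + n, by omega⟩ : Fin (2 * n))
        else ⟨(i : ℕ) - n, by have := i.isLt; omega⟩) ?_ ?_ ?_ ?_
    · intro i
      by_cases h : (i : ℕ) < n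
      · simp [symplJ, h]; ring
      · have h2 : (i : ℕ) - n < n := by have := i.isLt; omega
        have h3 : (i : ℕ) - n + n = i := by omega
        simp [symplJ, h, h2, h3]; ring
    · intro i _ h0
      have h1 := congrArg Fin.val h0
      have hi := i.isLt
      by_cases h : (i : ℕ) < n
      · simp only [h, dite_true] at h1; omega
      · simp only [h, dite_false] at h1; omega
    · intro i; simp
    · intro i
      by_cases h : (i : ℕ) < n
      · simp [h]
      · have h2 : (i : ℕ) - n < n := by have := i.isLt; omega
        have h3 : (i : ℕ) - n + n = i := by omega
        simp [h, h2, h3]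
  rw [PiLp.inner_apply]
  rw [← key]
  refine Finset.sum_congr rfl fun i _ => ?_
  simp [mul_comm]

section gauge

variable {E : Type*} [NormedAddCommGroup E] [InnerProductSpace ℝ E] [CompleteSpace E]

theorem grad_comp_aux {j : E → ℝ} {φ : ℝ → ℝ} {a : ℝ} {z : E}
    (hj : DifferentiableAt ℝ j z) (hφ : DifferentiableAt ℝ φ (j z)) :
    HasGradientAt (fun z => a * φ (j z)) ((a * deriv φ (j z)) • gradient j z) z := by
  have h1 := hj.hasGradientAt.hasFDerivAt
  have h2 := (hφ.hasDerivAt.const_mul a).comp_hasFDerivAt z h1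
  rw [hasGradientAt_iff_hasFDerivAt]
  rw [map_smul]
  exact h2

theorem grad_hom_aux {j : E → ℝ}
    (hjhom : ∀ lam : ℝ, 0 ≤ lam → ∀ x, j (lam • x) = lam * j x)
    {z : E} (hj : DifferentiableAt ℝ j z) {r : ℝ} (hr : 0 < r) :
    gradient j (r • z) = gradient j z := by
  have h1 : HasFDerivAt j (fderiv ℝ j z) (r⁻¹ • r • z) := by
    rw [smul_smul, inv_mul_cancel₀ hr.ne', one_smul]; exact hj.hasFDerivAt
  have h2 : HasFDerivAt (fun w : E => r⁻¹ • w) (r⁻¹ • ContinuousLinearMap.id ℝ E) (r • z) :=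
    (hasFDerivAt_id _).const_smul r⁻¹
  have h3 := (HasFDerivAt.comp (r • z) h1 h2).const_mul r
  have h4 : (fun w => r * (j ∘ fun w : E => r⁻¹ • w) w) = j := by
    funext w
    simp only [Function.comp]
    rw [hjhom _ (inv_nonneg.2 hr.le)]
    field_simp
  rw [h4] at h3
  have h5 : fderiv ℝ j (r • z) = fderiv ℝ j z := by
    rw [h3.fderiv]
    ext w
    simp
    field_simp
  simp only [gradient, h5]

theorem euler_aux {j : E → ℝ}
    (hjhom : ∀ lam : ℝ, 0 ≤ lam → ∀ x, j (lam • x) = lam * j x)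
    {z : E} (hj : DifferentiableAt ℝ j z) : inner ℝ (gradient j z) z = j z := by
  have h1 : HasFDerivAt j (fderiv ℝ j z) ((1 : ℝ) • z) := by
    rw [one_smul]; exact hj.hasFDerivAt
  have h2 : HasDerivAt (fun s : ℝ => s • z) ((1 : ℝ) • z) 1 := (hasDerivAt_id _).smul_const z
  have h3 := h1.comp_hasDerivAt (1 : ℝ) h2
  have h4 : HasDerivAt (fun s : ℝ => s * j z) (1 * j z) 1 := (hasDerivAt_id _).mul_const _
  have h5 : (j ∘ fun s : ℝ => s • z) =ᶠ[𝓝 1] (fun s : ℝ => s * j z) := by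
    filter_upwards [lt_mem_nhds (zero_lt_one : (0 : ℝ) < 1)] with s hs
    exact hjhom s (le_of_lt hs) z
  have h6 := h3.unique (h4.congr_of_eventuallyEq h5)
  rw [one_smul, one_mul] at h6
  rw [← h6, gradient, InnerProductSpace.toDual_symm_apply]

theorem grad_zero_aux [ProperSpace E] {j : E → ℝ} {φ : ℝ → ℝ} {a : ℝ} (hjc : Continuous j)
    (hjhom : ∀ lam : ℝ, 0 ≤ lam → ∀ x, j (lam • x) = lam * j x)
    (hφ0 : φ 0 = 0) (hφ : HasDerivAt φ 0 0) :
    HasGradientAt (fun z => a * φ (j z)) 0 (0 : E) := by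
  have hj0 : j 0 = 0 := by simpa using hjhom 0 le_rfl 0
  obtain ⟨M, hM⟩ := (isCompact_sphere (0 : E) 1).exists_bound_of_continuousOn hjc.continuousOn
  have hO : j =O[𝓝 0] (fun z : E => z) := by
    refine Asymptotics.IsBigO.of_bound M (Eventually.of_forall fun z => ?_)
    by_cases hz : z = 0
    · simp [hz, hj0]
    have hn : 0 < ‖z‖ := norm_pos_iff.2 hz
    have h1 := hM (‖z‖⁻¹ • z) (by simp [norm_smul, hn.ne'])
    have h2 : j z = ‖z‖ * j (‖z‖⁻¹ • z) := by
      rw [← hjhom _ hn.le, smul_smul, mul_inv_cancel₀ hn.ne', one_smul]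
    rw [h2, norm_mul, norm_norm, mul_comm]
    gcongr
  have ho : φ =o[𝓝 0] (fun t : ℝ => t) := by
    have := hφ.isLittleO
    simpa [hφ0] using this
  have ht : Tendsto j (𝓝 0) (𝓝 0) := by
    have := hjc.tendsto 0
    rwa [hj0] at this
  have h := ((ho.comp_tendsto ht).trans_isBigO hO).const_mul_left a
  rw [hasGradientAt_iff_isLittleO]
  simpa [hj0, hφ0, Function.comp_def] using h

end gauge

/-- Lemma 2.4: for the Hamiltonian `H̃ = a·φ(j(x))` built from the gauge
function `j` of a star-shaped hypersurface and an auxiliary function `φ`, the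
only constant `T`-periodic solution of `ẋ = J∇H̃(x)` is `0`, and the
nonconstant `T`-periodic solutions are exactly the curves `ρ·y(τt/T)` obtained
from closed characteristics `(τ, y)` with `φ'(ρ)/ρ = τ/(aT)`. -/
theorem solutions_of_modified_hamiltonian_system (n : ℕ) (T a : ℝ)
    (hT : 0 < T) (ha : 0 < a)
    (j : EuclideanSpace ℝ (Fin (2 * n)) → ℝ)
    (hjc : Continuous j)
    (hjhom : ∀ lam : ℝ, 0 ≤ lam → ∀ x, j (lam • x) = lam * j x)
    (hjpos : ∀ x, x ≠ 0 → 0 < j x)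
    (hjd : ContDiffOn ℝ 1 j {x | x ≠ 0})
    (φ : ℝ → ℝ) (hφ : ContDiff ℝ 1 φ)
    (hφ0 : φ 0 = 0) (hφ'0 : deriv φ 0 = 0)
    (hφ'pos : ∀ t : ℝ, 0 < t → 0 < deriv φ t)
    (hmono : StrictAntiOn (fun t => deriv φ t / t) (Set.Ioi (0:ℝ)))
    (hlim : Tendsto (fun t => deriv φ t / t) (𝓝[>] (0:ℝ)) (𝓝 1)) :
    -- (1) the only constant `T`-periodic solution is `x ≡ 0`
    (∀ x : ℝ → EuclideanSpace ℝ (Fin (2 * n)),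
      (∀ t, HasDerivAt x (symplJ n (gradient (fun z => a * φ (j z)) (x t))) t) →
      (∀ t, x (t + T) = x t) →
      (∀ s t, x s = x t) →
      ∀ t, x t = 0) ∧
    -- (2) characterization of nonconstant `T`-periodic solutions
    (∀ x : ℝ → EuclideanSpace ℝ (Fin (2 * n)),
      ContDiff ℝ 1 x →
      (∀ t, x (t + T) = x t) →
      (∃ s t, x s ≠ x t) →
      ((∀ t, HasDerivAt x (symplJ n (gradient (fun z => a * φ (j z)) (x t))) t) ↔
        ∃ (ρ τ : ℝ) (y : ℝ → EuclideanSpace ℝ (Fin (2 * n))),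
          0 < ρ ∧ 0 < τ ∧ ContDiff ℝ 1 y ∧
          (∀ t, y (t + τ) = y t) ∧
          (∀ t, j (y t) = 1) ∧
          (∀ t, HasDerivAt y (symplJ n (gradient j (y t))) t) ∧
          deriv φ ρ / ρ = τ / (a * T) ∧
          (∀ t, x t = ρ • y (τ * t / T)))) := by
  have hdiff : ∀ z, z ≠ 0 → DifferentiableAt ℝ j z := fun z hz =>
    (hjd.contDiffAt (isOpen_ne.mem_nhds hz)).differentiableAt (by norm_num)
  have hφd : Differentiable ℝ φ := hφ.differentiable (by norm_num)
  have hj0 : j 0 = 0 := by simpa using hjhom 0 le_rfl 0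
  have hgrad : ∀ z, z ≠ 0 → gradient (fun z => a * φ (j z)) z
      = (a * deriv φ (j z)) • gradient j z := fun z hz =>
    (grad_comp_aux (hdiff z hz) (hφd _)).gradient
  refine ⟨?_, ?_⟩
  · intro x hx _ hc t
    by_contra hne
    have h1 : HasDerivAt x 0 t := by
      have : x = fun _ => x t := funext fun s => hc s t
      rw [this]; exact hasDerivAt_const _ _
    have h2 := symplJ_eq_zero_aux _ _ ((hx t).unique h1)
    rw [hgrad _ hne] at h2
    have hp := hjpos _ hne
    have h3 : gradient j (x t) = 0 := by
      rcases smul_eq_zero.1 h2 with h | h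
      · exact absurd h (mul_pos ha (hφ'pos _ hp)).ne'
      · exact h
    have h4 := euler_aux hjhom (hdiff _ hne)
    rw [h3, inner_zero_left] at h4
    exact hp.ne h4
  · intro x hxc hxT hnc
    constructor
    · intro hx
      have hHd : ∀ z, DifferentiableAt ℝ (fun z => a * φ (j z)) z := by
        intro z
        by_cases hz : z = 0
        · subst hz
          have h0 : HasDerivAt φ 0 0 := by simpa [hφ'0] using (hφd 0).hasDerivAt
          exact (grad_zero_aux hjc hjhom hφ0 h0).differentiableAt
        · exact (grad_comp_aux (hdiff z hz) (hφd _)).differentiableAt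
      have hHx : ∀ t, HasDerivAt (fun t => a * φ (j (x t))) 0 t := by
        intro t
        have h := (hHd (x t)).hasGradientAt.hasFDerivAt.comp_hasDerivAt t (hx t)
        rw [InnerProductSpace.toDual_apply_apply, inner_symplJ_aux] at h
        exact h
      have hconst : ∀ s t, a * φ (j (x s)) = a * φ (j (x t)) :=
        is_const_of_deriv_eq_zero (fun t => (hHx t).differentiableAt) (fun t => (hHx t).deriv)
      have hsm : StrictMonoOn φ (Set.Ici 0) := by
        refine strictMonoOn_of_deriv_pos (convex_Ici 0) hφ.continuous.continuousOn ?_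
        intro t ht
        rw [interior_Ici] at ht
        exact hφ'pos t ht
      have hjnn : ∀ z, 0 ≤ j z := by
        intro z
        by_cases hz : z = 0
        · rw [hz, hj0]
        · exact (hjpos z hz).le
      have hjconst : ∀ t, j (x t) = j (x 0) := fun t =>
        hsm.injOn (hjnn _) (hjnn _) (mul_left_cancel₀ ha.ne' (hconst t 0))
      have hρ : 0 < j (x 0) := by
        rcases (hjnn (x 0)).lt_or_eq with h | h
        · exact h
        · exfalso
          have hz : ∀ t, x t = 0 := by
            intro t
            by_contra hne
            have := hjpos _ hne
            rw [hjconst, ← h] at this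
            exact lt_irrefl _ this
          obtain ⟨s, t, hst⟩ := hnc
          exact hst (by rw [hz, hz])
      generalize j (x 0) = ρ at hjconst hρ
      have hxne : ∀ t, x t ≠ 0 := by
        intro t h
        have := hjconst t
        rw [h, hj0] at this
        exact hρ.ne this
      have hφρ := hφ'pos ρ hρ
      obtain ⟨τ, hτ⟩ : ∃ τ, τ = a * T * deriv φ ρ / ρ := ⟨_, rfl⟩
      have hτpos : 0 < τ := by rw [hτ]; positivity
      refine ⟨ρ, τ, fun s => ρ⁻¹ • x (T / τ * s), hρ, hτpos, ?_, ?_, ?_, ?_, ?_, ?_⟩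
      · exact (hxc.comp (contDiff_const.mul contDiff_id)).const_smul ρ⁻¹
      · intro t
        have : T / τ * (t + τ) = T / τ * t + T := by field_simp
        simp only [this, hxT]
      · intro t
        simp only []
        rw [hjhom _ (inv_nonneg.2 hρ.le), hjconst, inv_mul_cancel₀ hρ.ne']
      · intro t
        have h1 : HasDerivAt (fun s : ℝ => T / τ * s) (T / τ * 1) t :=
          (hasDerivAt_id t).const_mul _
        have h2 := ((hx (T / τ * t)).scomp t h1).const_smul ρ⁻¹
        simp only []
        rw [grad_hom_aux hjhom (hdiff _ (hxne _)) (inv_pos.2 hρ)]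
        refine h2.congr_deriv ?_
        rw [hgrad _ (hxne _), hjconst, symplJ_smul_aux, smul_smul, smul_smul]
        have : ρ⁻¹ * (T / τ * 1 * (a * deriv φ ρ)) = 1 := by
          rw [hτ]; field_simp
        first
          | rw [this, one_smul]
          | (rw [mul_assoc, this, one_smul])
      · rw [hτ]; field_simp
      · intro t
        have : T / τ * (τ * t / T) = t := by field_simp
        simp only [this]
        rw [smul_smul, mul_inv_cancel₀ hρ.ne', one_smul]
    · rintro ⟨ρ, τ, y, hρ, hτ, -, -, hy1, hy, hrel, hxy⟩ t
      have hyne : ∀ t, y t ≠ 0 := by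
        intro t h
        have := hy1 t
        rw [h, hj0] at this
        exact zero_ne_one this
      have hxe : x = fun t => ρ • y (τ * t / T) := funext hxy
      have h1 : HasDerivAt (fun s : ℝ => τ * s / T) (τ * 1 / T) t :=
        ((hasDerivAt_id t).const_mul τ).div_const T
      have h2 := ((hy (τ * t / T)).scomp t h1).const_smul ρ
      rw [hxe]
      refine h2.congr_deriv ?_
      simp only []
      rw [hgrad _ (smul_ne_zero hρ.ne' (hyne _)), hjhom _ hρ.le, hy1, mul_one,
        grad_hom_aux hjhom (hdiff _ (hyne _)) hρ, symplJ_smul_aux, smul_smul]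
      congr 1
      field_simp at hrel ⊢
      linarith
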